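/- Let E be a Banach space with cotype 2. Then for every Banach space F, a continuous bilinear map T : E × E → F is 1-semi-integral if and only if it is 1-dominated. -/

import Mathlib

open MeasureTheory

/-- Weak `ℓ_q` norm of a finite family in a normed space. -/
noncomputable def weakLpNorm (𝕜 : Type*) [RCLike 𝕜] {E : Type*} [NormedAddCommGroup E]
    [NormedSpace 𝕜 E] (q : ℝ) {m : ℕ} (x : Fin m → E) : ℝ :=
  ⨆ φ : {φ : E →L[𝕜] 𝕜 // ‖φ‖ ≤ 1}, (∑ j, ‖φ.1 (x j)‖ ^ q) ^ (1 / q)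

/-- `T` satisfies the `p`-semi-integral inequality with constant `C`, witnessed by a regular
Borel probability measure on the product of the closed dual unit balls with their
weak-star topologies. -/
def SemiIntegralWith (𝕜 : Type*) [RCLike 𝕜] {ι : Type*} [Fintype ι] {E : ι → Type*}
    [∀ i, NormedAddCommGroup (E i)] [∀ i, NormedSpace 𝕜 (E i)]
    {F : Type*} [NormedAddCommGroup F]
    (p C : ℝ) (T : (∀ i, E i) → F) : Prop :=
  letI : MeasurableSpace (∀ i, {φ : WeakDual 𝕜 (E i) // ∀ z, ‖φ z‖ ≤ ‖z‖}) := borel _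
  ∃ μ : Measure (∀ i, {φ : WeakDual 𝕜 (E i) // ∀ z, ‖φ z‖ ≤ ‖z‖}),
    IsProbabilityMeasure μ ∧ μ.Regular ∧
      ∀ x : ∀ i, E i,
        ‖T x‖ ≤ C * (∫ φ, ∏ i, ‖(φ i).1 (x i)‖ ^ p ∂μ) ^ (1 / p)

/-- The `si,p` norm: infimum of admissible constants. -/
noncomputable def siNorm (𝕜 : Type*) [RCLike 𝕜] {ι : Type*} [Fintype ι] {E : ι → Type*}
    [∀ i, NormedAddCommGroup (E i)] [∀ i, NormedSpace 𝕜 (E i)]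
    {F : Type*} [NormedAddCommGroup F]
    (p : ℝ) (T : (∀ i, E i) → F) : ℝ :=
  sInf {C : ℝ | 0 ≤ C ∧ SemiIntegralWith 𝕜 p C T}

/-- `T` is absolutely `(p; q₁,…,qₙ)`-summing with constant `C`. -/
def AbsSummingWith (𝕜 : Type*) [RCLike 𝕜] {ι : Type*} [Fintype ι] {E : ι → Type*}
    [∀ i, NormedAddCommGroup (E i)] [∀ i, NormedSpace 𝕜 (E i)]
    {F : Type*} [NormedAddCommGroup F]
    (p : ℝ) (q : ι → ℝ) (C : ℝ) (T : (∀ i, E i) → F) : Prop :=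
  ∀ (m : ℕ) (x : ∀ i, Fin m → E i),
    (∑ j, ‖T (fun i => x i j)‖ ^ p) ^ (1 / p) ≤ C * ∏ i, weakLpNorm 𝕜 (q i) (x i)

/-- `T` is `p`-dominated with constant `C`, witnessed by regular Borel probability measures
on the closed dual unit balls with their weak-star topologies. -/
def DominatedWith (𝕜 : Type*) [RCLike 𝕜] {ι : Type*} [Fintype ι] {E : ι → Type*}
    [∀ i, NormedAddCommGroup (E i)] [∀ i, NormedSpace 𝕜 (E i)]
    {F : Type*} [NormedAddCommGroup F]
    (p C : ℝ) (T : (∀ i, E i) → F) : Prop :=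
  letI : ∀ i, MeasurableSpace {φ : WeakDual 𝕜 (E i) // ∀ z, ‖φ z‖ ≤ ‖z‖} := fun i => borel _
  ∃ μ : ∀ i, Measure {φ : WeakDual 𝕜 (E i) // ∀ z, ‖φ z‖ ≤ ‖z‖},
    (∀ i, IsProbabilityMeasure (μ i)) ∧ (∀ i, (μ i).Regular) ∧
      ∀ x : ∀ i, E i,
        ‖T x‖ ≤ C * ∏ i, (∫ φ, ‖φ.1 (x i)‖ ^ p ∂(μ i)) ^ (1 / p)

/-- `E` is an `𝓛_∞`-space. -/
def IsLinftySpace (𝕜 : Type*) [RCLike 𝕜] (E : Type*) [NormedAddCommGroup E]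
    [NormedSpace 𝕜 E] : Prop :=
  ∃ lam : ℝ, 1 ≤ lam ∧ ∀ M : Submodule 𝕜 E, FiniteDimensional 𝕜 M →
    ∃ N : Submodule 𝕜 E, M ≤ N ∧ FiniteDimensional 𝕜 N ∧
      ∃ v : N ≃L[𝕜] (Fin (Module.finrank 𝕜 N) → 𝕜),
        ‖(v : N →L[𝕜] (Fin (Module.finrank 𝕜 N) → 𝕜))‖ *
          ‖(v.symm : (Fin (Module.finrank 𝕜 N) → 𝕜) →L[𝕜] N)‖ ≤ lam

/-- `F` has cotype `q`. -/
def HasCotype (q : ℝ) (F : Type*) [NormedAddCommGroup F] : Prop :=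
  ∃ C : ℝ, 0 ≤ C ∧ ∀ (m : ℕ) (x : Fin m → F),
    (∑ j, ‖x j‖ ^ q) ^ (1 / q) ≤
      C * ((∑ ε : Fin m → Bool, ‖∑ j, (if ε j then x j else -x j)‖ ^ (2 : ℝ)) / 2 ^ m)
        ^ ((1 : ℝ) / 2)

open scoped CompactlySupported

theorem aux_riesz {K : Type*} [TopologicalSpace K] [CompactSpace K] [T2Space K]
    [MeasurableSpace K] [BorelSpace K] (L : C(K, ℝ) →ₗ[ℝ] ℝ)
    (hpos : ∀ g : C(K, ℝ), (∀ k, 0 ≤ g k) → 0 ≤ L g) (h1 : L 1 = 1) :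
    ∃ μ : Measure K, IsProbabilityMeasure μ ∧ μ.Regular ∧ ∀ g : C(K, ℝ), ∫ k, g k ∂μ = L g := by
  let M : C_c(K, ℝ) →ₗ[ℝ] ℝ :=
    { toFun := fun f => L f.toContinuousMap
      map_add' := fun f g => by
        rw [← map_add]; rfl
      map_smul' := fun c f => by
        rw [RingHom.id_apply, ← map_smul]; rfl }
  let Λ : C_c(K, ℝ) →ₚ[ℝ] ℝ := PositiveLinearMap.mk₀ M (fun f hf => hpos _ (fun k => hf k))
  have hint : ∀ g : C(K, ℝ), ∫ k, g k ∂(RealRMK.rieszMeasure Λ) = L g := fun g =>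
    RealRMK.integral_rieszMeasure Λ (CompactlySupportedContinuousMap.continuousMapEquiv g)
  refine ⟨RealRMK.rieszMeasure Λ, ⟨?_⟩, inferInstance, hint⟩
  have := hint 1
  rw [h1] at this
  simp [Measure.real] at this
  exact (ENNReal.toReal_eq_one_iff _).1 this

theorem aux_pietsch {K : Type*} [TopologicalSpace K] [CompactSpace K] [Nonempty K]
    {α : Type*} (g : α → C(K, ℝ))
    (h : ∀ (n : ℕ) (w : Fin n → ℝ) (a : Fin n → α), (∀ i, 0 ≤ w i) →
      ∃ k, 0 ≤ ∑ i, w i * g (a i) k) :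
    ∃ L : C(K, ℝ) →ₗ[ℝ] ℝ, (∀ f : C(K, ℝ), (∀ k, 0 ≤ f k) → 0 ≤ L f) ∧ L 1 = 1 ∧
      ∀ a, 0 ≤ L (g a) := by
  classical
  obtain ⟨L0, u, hL1, hL2⟩ := geometric_hahn_banach_open (E := C(K, ℝ))
    (s := {f : C(K, ℝ) | ∀ k, f k < 0}) (t := insert 0 (convexHull ℝ (Set.range g)) |> convexHull ℝ)
    (by
      intro f hf f' hf' a b ha hb hab k
      have h1 := hf k
      have h2 := hf' k
      simp only [ContinuousMap.add_apply, ContinuousMap.smul_apply, smul_eq_mul]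
      rcases ha.eq_or_lt with rfl | ha
      · have : b = 1 := by linarith
        subst this; linarith
      · nlinarith)
    (by
      have := ContinuousMap.isOpen_setOfPred_mapsTo (X := K) (Y := ℝ) isCompact_univ
        (isOpen_Iio (a := (0:ℝ)))
      convert this using 1
      ext f; simp [Set.MapsTo])
    (convex_convexHull _ _)
    (by
      rw [Set.disjoint_left]
      intro f hf hf'
      have hsub : convexHull ℝ (insert 0 (convexHull ℝ (Set.range g))) ⊆
          convexHull ℝ (insert 0 (Set.range g)) := by
        apply convexHull_min _ (convex_convexHull _ _)
        rintro x (rfl | hx)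
        · exact subset_convexHull _ _ (Set.mem_insert _ _)
        · exact convexHull_mono (Set.subset_insert _ _) hx
      have hf2 := hsub hf'
      rw [convexHull_eq] at hf2
      obtain ⟨ι, t, w, z, hw0, hw1, hz, hf3⟩ := hf2
      rw [Finset.centerMass_eq_of_sum_1 _ _ hw1] at hf3
      let t' := t.filter (fun i => z i ∈ Set.range g)
      have hz' : ∀ i : t', ∃ a, g a = z i := fun i => (Finset.mem_filter.1 i.2).2
      choose a ha using hz'
      obtain ⟨k, hk⟩ := h t'.card (fun i => w (t'.equivFin.symm i)) (fun i => a (t'.equivFin.symm i))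
        (fun i => hw0 _ (Finset.mem_filter.1 (t'.equivFin.symm i).2).1)
      have e : f k = ∑ i : Fin t'.card, w (t'.equivFin.symm i) * g (a (t'.equivFin.symm i)) k := by
        rw [← hf3, Equiv.sum_comp t'.equivFin.symm (fun i : t' => w i * g (a i) k)]
        simp only [ha]
        rw [Finset.sum_coe_sort t' (fun i => w i * z i k), ContinuousMap.sum_apply]
        symm
        apply Finset.sum_subset (Finset.filter_subset _ _)
        intro i hi hi'
        have : z i = 0 := by
          rcases hz i hi with h | h
          · exact h
          · exact absurd (Finset.mem_filter.2 ⟨hi, h⟩) hi'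
        simp [this]
      rw [← e] at hk
      exact absurd (hf k) (not_lt.2 hk))
  have hu0 : u ≤ 0 := by
    have := hL2 0 (subset_convexHull _ _ (Set.mem_insert _ _))
    simpa using this
  have hneg : ∀ f : C(K, ℝ), (∀ k, f k < 0) → L0 f < 0 := fun f hf => (hL1 f hf).trans_le hu0
  have hone : 0 < L0 1 := by
    have := hneg (-1) (fun k => by simp)
    simpa using this
  have hpos : ∀ f : C(K, ℝ), (∀ k, 0 ≤ f k) → 0 ≤ L0 f := by
    intro f hf
    by_contra hlt
    push Not at hlt
    have := hneg (-f - (-(L0 f) / (2 * L0 1)) • (1 : C(K, ℝ))) (fun k => by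
      have := hf k
      have h2 : 0 < -(L0 f) / (2 * L0 1) := by apply div_pos <;> linarith
      simp only [ContinuousMap.sub_apply, ContinuousMap.neg_apply, ContinuousMap.smul_apply, ContinuousMap.one_apply, smul_eq_mul]
      linarith)
    rw [map_sub, map_neg, map_smul, smul_eq_mul] at this
    have e : -(L0 f) / (2 * L0 1) * L0 1 = -(L0 f) / 2 := by field_simp
    rw [e] at this
    linarith
  have hu : 0 ≤ u := by
    by_contra hlt
    push Not at hlt
    have := hL1 ((u / (2 * L0 1)) • (1 : C(K, ℝ))) (fun k => by
      simp only [ContinuousMap.smul_apply, ContinuousMap.one_apply, smul_eq_mul, mul_one]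
      apply div_neg_of_neg_of_pos hlt; linarith)
    rw [map_smul, smul_eq_mul] at this
    have e : u / (2 * L0 1) * L0 1 = u / 2 := by field_simp
    rw [e] at this
    linarith
  refine ⟨(L0 1)⁻¹ • (L0 : C(K, ℝ) →ₗ[ℝ] ℝ), ?_, ?_, ?_⟩
  · intro f hf
    have := hpos f hf
    simp only [LinearMap.smul_apply, ContinuousLinearMap.coe_coe, smul_eq_mul]
    positivity
  · simp [hone.ne']
  · intro a
    have := hL2 (g a) (subset_convexHull _ _ (Set.mem_insert_of_mem _
      (subset_convexHull _ _ (Set.mem_range_self a))))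
    simp only [LinearMap.smul_apply, ContinuousLinearMap.coe_coe, smul_eq_mul]
    have : 0 ≤ L0 (g a) := hu.trans this
    positivity

theorem aux_compact (𝕜 : Type*) [RCLike 𝕜] (E : Type*) [NormedAddCommGroup E] [NormedSpace 𝕜 E] :
    CompactSpace {φ : WeakDual 𝕜 E // ∀ z, ‖φ z‖ ≤ ‖z‖} := by
  refine isCompact_iff_compactSpace (s := {φ : WeakDual 𝕜 E | ∀ z, ‖φ z‖ ≤ ‖z‖}).1 ?_
  have := WeakDual.isCompact_closedBall (𝕜 := 𝕜) (E := E) 0 1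
  convert this using 1
  ext φ
  simp only [Set.mem_ofPred_eq, Set.mem_preimage, mem_closedBall_zero_iff]
  constructor
  · intro h
    exact ContinuousLinearMap.opNorm_le_bound _ zero_le_one (fun z => by simpa using h z)
  · intro h z
    have := (WeakDual.toStrongDual φ).le_of_opNorm_le h z
    simpa using this

theorem aux_khin {𝕜 : Type*} [RCLike 𝕜] (m : ℕ) (a : Fin m → 𝕜) :
    (∑ ε : Fin m → Bool, ‖∑ j, (if ε j then a j else -a j)‖ ^ 2 = 2 ^ m * ∑ j, ‖a j‖ ^ 2) ∧
    (∑ ε : Fin m → Bool, ‖∑ j, (if ε j then a j else -a j)‖ ^ 4 ≤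
      2 ^ m * (3 * (∑ j, ‖a j‖ ^ 2) ^ 2)) := by
  induction m with
  | zero => simp
  | succ m ih =>
    obtain ⟨ih2, ih4⟩ := ih (fun j => a j.succ)
    have key : ∀ G : 𝕜 → ℝ, ∑ ε : Fin (m+1) → Bool, G (∑ j, (if ε j then a j else -a j)) =
        ∑ ε : Fin m → Bool, (G (∑ j, (if ε j then a j.succ else -a j.succ) + a 0) +
          G (∑ j, (if ε j then a j.succ else -a j.succ) - a 0)) := by
      intro G
      rw [← (Fin.consEquiv (fun _ => Bool)).sum_comp, Fintype.sum_prod_type, Fintype.sum_bool,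
        ← Finset.sum_add_distrib]
      apply Finset.sum_congr rfl
      intro ε _
      simp [Fin.consEquiv, Fin.sum_univ_succ, sub_eq_add_neg, add_comm]
    have par : ∀ s b : 𝕜, ‖s + b‖ ^ 2 + ‖s - b‖ ^ 2 = 2 * (‖s‖ ^ 2 + ‖b‖ ^ 2) := by
      intro s b
      have := parallelogram_law_with_norm 𝕜 s b
      nlinarith
    have par4 : ∀ s b : 𝕜, ‖s + b‖ ^ 4 + ‖s - b‖ ^ 4 ≤
        2 * (‖s‖ ^ 4 + 6 * ‖b‖ ^ 2 * ‖s‖ ^ 2 + ‖b‖ ^ 4) := by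
      intro s b
      have h1 := par s b
      have h2 : |‖s + b‖ ^ 2 - ‖s - b‖ ^ 2| ≤ 4 * (‖s‖ * ‖b‖) := by
        have e1 := norm_add_sq (𝕜 := 𝕜) s b
        have e2 := norm_sub_sq (𝕜 := 𝕜) s b
        have e3 := (RCLike.abs_re_le_norm _).trans (norm_inner_le_norm (𝕜 := 𝕜) s b)
        rw [e1, e2, show ∀ x y z : ℝ, x + 2 * y + z - (x - 2 * y + z) = 4 * y by intros; ring,
          abs_mul, abs_of_pos (by norm_num : (0:ℝ) < 4)]
        gcongr
      have h3 := sq_le_sq' (abs_le.1 h2).1 (abs_le.1 h2).2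
      have h4 : (‖s + b‖ ^ 2 + ‖s - b‖ ^ 2) ^ 2 = (2 * (‖s‖ ^ 2 + ‖b‖ ^ 2)) ^ 2 := by rw [h1]
      nlinarith
    rw [Fin.sum_univ_succ (fun j => ‖a j‖ ^ 2)]
    constructor
    · rw [key (fun z => ‖z‖ ^ 2)]
      simp only [par]
      rw [← Finset.mul_sum, Finset.sum_add_distrib, ih2]
      simp; ring
    · rw [key (fun z => ‖z‖ ^ 4)]
      refine (Finset.sum_le_sum (fun ε _ => par4 _ _)).trans ?_
      rw [← Finset.mul_sum, Finset.sum_add_distrib, Finset.sum_add_distrib, ← Finset.mul_sum, ih2]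
      simp only [Finset.sum_const, Finset.card_univ, Fintype.card_fun, Fintype.card_bool, Fintype.card_fin, nsmul_eq_mul]
      push_cast
      have hp : (0:ℝ) < 2 ^ m := by positivity
      have : 0 ≤ (2:ℝ) ^ m * ‖a 0‖ ^ 4 := by positivity
      rw [pow_succ (2:ℝ) m]
      generalize (∑ x : Fin m → Bool, ‖∑ j, if x j = true then a j.succ else -a j.succ‖ ^ 4) = Q at *
      generalize (∑ j : Fin m, ‖a j.succ‖ ^ 2) = A at *
      generalize ‖a 0‖ = b at *
      generalize (2:ℝ) ^ m = c at *
      nlinarith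

def AuxTwoSumming {𝕜 : Type*} [RCLike 𝕜] {E : Type*} [NormedAddCommGroup E] [NormedSpace 𝕜 E]
    {n : ℕ} (x : Fin n → E) (κ : ℝ) : Prop :=
  ∀ (m : ℕ) (f : Fin m → Fin n → 𝕜) (S : ℝ), (∀ k, ∑ j, ‖f j k‖ ^ 2 ≤ S) →
    ∑ j, ‖∑ i, f j i • x i‖ ^ 2 ≤ κ * S

theorem aux_B1 {𝕜 : Type*} [RCLike 𝕜] {E : Type*} [NormedAddCommGroup E] [NormedSpace 𝕜 E]
    {n : ℕ} [NeZero n] (x : Fin n → E) (κ : ℝ) (hP : AuxTwoSumming (𝕜 := 𝕜) x κ) :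
    ∃ l : Fin n → ℝ, (∀ i, 0 ≤ l i) ∧ ∑ i, l i = 1 ∧
      ∀ a : Fin n → 𝕜, ‖∑ i, a i • x i‖ ^ 2 ≤ κ * ∑ i, l i * ‖a i‖ ^ 2 := by
  obtain ⟨L, hpos, h1, hL⟩ := aux_pietsch (K := Fin n) (α := Fin n → 𝕜)
    (fun a => ⟨fun k => κ * ‖a k‖ ^ 2 - ‖∑ i, a i • x i‖ ^ 2, continuous_of_discreteTopology⟩)
    (by
      intro m w a hw
      obtain ⟨k, hk⟩ := Finite.exists_max (fun k : Fin n => ∑ j, w j * ‖a j k‖ ^ 2)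
      refine ⟨k, ?_⟩
      have hs : ∀ j, ‖((Real.sqrt (w j) : ℝ) : 𝕜)‖ ^ 2 = w j := fun j => by
        rw [RCLike.norm_ofReal, sq_abs, Real.sq_sqrt (hw j)]
      have := hP m (fun j i => ((Real.sqrt (w j) : ℝ) : 𝕜) * a j i) (∑ j, w j * ‖a j k‖ ^ 2)
        (fun k' => by
          simp only [norm_mul, mul_pow, hs]
          exact hk k')
      simp only [mul_smul, ← Finset.smul_sum, norm_smul, mul_pow, hs] at this
      simp only [ContinuousMap.coe_mk, mul_sub, Finset.sum_sub_distrib]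
      rw [Finset.mul_sum] at this
      rw [sub_nonneg]
      refine this.trans (le_of_eq (Finset.sum_congr rfl fun j _ => by ring)))
  let e : Fin n → C(Fin n, ℝ) := fun i => ⟨Pi.single i 1, continuous_of_discreteTopology⟩
  have hdec : ∀ f : C(Fin n, ℝ), L f = ∑ i, L (e i) * f i := by
    intro f
    have : f = ∑ i, f i • e i := by
      ext k
      simp [e, ContinuousMap.sum_apply, Pi.single_apply]
    conv_lhs => rw [this]
    rw [map_sum]
    simp [mul_comm]
  refine ⟨fun i => L (e i), fun i => hpos _ (fun k => ?_), ?_, fun a => ?_⟩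
  · simp only [e, ContinuousMap.coe_mk, Pi.single_apply]; split_ifs <;> simp
  · have := hdec 1
    rw [h1] at this
    simpa using this.symm
  · have h2 := hdec 1
    rw [h1] at h2
    simp only [ContinuousMap.one_apply, mul_one] at h2
    have := hL a
    rw [hdec] at this
    simp only [ContinuousMap.coe_mk, mul_sub, Finset.sum_sub_distrib] at this
    rw [← Finset.sum_mul, ← h2, one_mul, sub_nonneg] at this
    refine this.trans (le_of_eq ?_)
    rw [Finset.mul_sum]
    exact Finset.sum_congr rfl fun j _ => by ring

theorem aux_B2 {𝕜 : Type*} [RCLike 𝕜] {E : Type*} [NormedAddCommGroup E] [NormedSpace 𝕜 E]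
    (C : ℝ) (hC0 : 0 < C)
    (hC : ∀ (m : ℕ) (x : Fin m → E), ∑ j, ‖x j‖ ^ 2 ≤
      C * ((∑ ε : Fin m → Bool, ‖∑ j, (if ε j then x j else -x j)‖ ^ 2) / 2 ^ m))
    {n : ℕ} [NeZero n] (x : Fin n → E)
    (hx : ∀ (a : Fin n → 𝕜) (t : ℝ), 0 ≤ t → (∀ i, ‖a i‖ ≤ t) → ‖∑ i, a i • x i‖ ≤ t)
    (κ : ℝ) (hκ : 0 ≤ κ) (hP : AuxTwoSumming (𝕜 := 𝕜) x κ) :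
    AuxTwoSumming (𝕜 := 𝕜) x (24 * C ^ 2 + κ / 2) := by
  obtain ⟨l, hl0, hl1, hl⟩ := aux_B1 x κ hP
  have trunc : ∀ (a : Fin n → 𝕜) (s : ℝ), 0 < s →
      ‖∑ i, a i • x i‖ ^ 2 ≤ 2 * s + 2 * (κ / s * ∑ i, l i * ‖a i‖ ^ 4) := by
    intro a s hs
    have hsplit : ∑ i, a i • x i = ∑ i, (if ‖a i‖ ^ 2 ≤ s then a i else 0) • x i +
        ∑ i, (if ‖a i‖ ^ 2 ≤ s then 0 else a i) • x i := by
      rw [← Finset.sum_add_distrib]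
      refine Finset.sum_congr rfl fun i _ => ?_
      split_ifs <;> simp
    have h1 : ‖∑ i, (if ‖a i‖ ^ 2 ≤ s then a i else 0) • x i‖ ≤ Real.sqrt s := by
      refine hx _ _ (Real.sqrt_nonneg s) fun i => ?_
      split_ifs with h
      · exact Real.le_sqrt_of_sq_le h
      · simp
    have h1' : ‖∑ i, (if ‖a i‖ ^ 2 ≤ s then a i else 0) • x i‖ ^ 2 ≤ s := by
      have := pow_le_pow_left₀ (norm_nonneg _) h1 2
      rwa [Real.sq_sqrt hs.le] at this
    have h2 : ‖∑ i, (if ‖a i‖ ^ 2 ≤ s then 0 else a i) • x i‖ ^ 2 ≤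
        κ / s * ∑ i, l i * ‖a i‖ ^ 4 := by
      refine (hl _).trans ?_
      rw [div_mul_eq_mul_div, mul_div_assoc]
      refine mul_le_mul_of_nonneg_left ?_ hκ
      rw [Finset.sum_div]
      refine Finset.sum_le_sum fun i _ => ?_
      rw [mul_div_assoc]
      refine mul_le_mul_of_nonneg_left ?_ (hl0 i)
      split_ifs with h
      · simp; positivity
      · rw [le_div_iff₀ hs]
        push Not at h
        nlinarith [sq_nonneg ‖a i‖]
    rw [hsplit]
    have h3 := norm_add_le (∑ i, (if ‖a i‖ ^ 2 ≤ s then a i else 0) • x i)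
      (∑ i, (if ‖a i‖ ^ 2 ≤ s then 0 else a i) • x i)
    have h4 := pow_le_pow_left₀ (norm_nonneg _) h3 2
    refine h4.trans ((add_sq_le).trans ?_)
    linarith
  intro m f S hS
  have hS0 : 0 ≤ S := le_trans (by positivity) (hS 0)
  rcases hS0.eq_or_lt with rfl | hSpos
  · have hz : ∀ j k, f j k = 0 := by
      intro j k
      have h0 := le_trans (Finset.single_le_sum (f := fun j => ‖f j k‖ ^ 2)
        (fun _ _ => by positivity) (Finset.mem_univ j)) (hS k)
      have : ‖f j k‖ ^ 2 = 0 := le_antisymm h0 (by positivity)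
      simpa using this
    simp [hz]
  refine (hC m _).trans ?_
  have hsum : ∀ ε : Fin m → Bool,
      (∑ j, (if ε j then ∑ i, f j i • x i else -∑ i, f j i • x i)) =
        ∑ i, (∑ j, (if ε j then f j i else -f j i)) • x i := by
    intro ε
    simp only [Finset.sum_smul]
    rw [Finset.sum_comm]
    refine Finset.sum_congr rfl fun j _ => ?_
    split_ifs <;> simp
  simp only [hsum]
  have hs : 0 < 12 * C * S := by positivity
  have hp : (0:ℝ) < 2 ^ m := by positivity
  have hb : ∑ ε : Fin m → Bool, ‖∑ i, (∑ j, (if ε j then f j i else -f j i)) • x i‖ ^ 2 ≤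
      2 ^ m * (2 * (12 * C * S) + 2 * (κ / (12 * C * S) * (3 * S ^ 2))) := by
    refine (Finset.sum_le_sum fun ε _ => trunc _ _ hs).trans ?_
    rw [Finset.sum_add_distrib, Finset.sum_const, ← Finset.mul_sum, ← Finset.mul_sum, Finset.sum_comm]
    simp only [← Finset.mul_sum]
    have h1 : ∑ i, l i * ∑ ε : Fin m → Bool, ‖∑ j, (if ε j then f j i else -f j i)‖ ^ 4 ≤
        2 ^ m * (3 * S ^ 2) := by
      calc _ ≤ ∑ i, l i * (2 ^ m * (3 * S ^ 2)) := by
            refine Finset.sum_le_sum fun i _ => mul_le_mul_of_nonneg_left ?_ (hl0 i)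
            refine (aux_khin m (fun j => f j i)).2.trans ?_
            have := hS i
            gcongr
        _ = _ := by rw [← Finset.sum_mul, hl1, one_mul]
    have h2 := mul_le_mul_of_nonneg_left h1 (show 0 ≤ κ / (12 * C * S) by positivity)
    simp only [Finset.card_univ, Fintype.card_fun, Fintype.card_bool,
      Fintype.card_fin, nsmul_eq_mul]
    push_cast
    nlinarith
  have hd : (∑ ε : Fin m → Bool, ‖∑ i, (∑ j, (if ε j then f j i else -f j i)) • x i‖ ^ 2) / 2 ^ m ≤
      2 * (12 * C * S) + 2 * (κ / (12 * C * S) * (3 * S ^ 2)) := by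
    rw [div_le_iff₀ hp, mul_comm]; exact hb
  refine (mul_le_mul_of_nonneg_left hd hC0.le).trans (le_of_eq ?_)
  field_simp
  ring

theorem aux_B3 {𝕜 : Type*} [RCLike 𝕜] {E : Type*} [NormedAddCommGroup E] [NormedSpace 𝕜 E]
    (C : ℝ) (hC0 : 0 < C)
    (hC : ∀ (m : ℕ) (x : Fin m → E), ∑ j, ‖x j‖ ^ 2 ≤
      C * ((∑ ε : Fin m → Bool, ‖∑ j, (if ε j then x j else -x j)‖ ^ 2) / 2 ^ m))
    {n : ℕ} [NeZero n] (x : Fin n → E)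
    (hx : ∀ (a : Fin n → 𝕜) (t : ℝ), 0 ≤ t → (∀ i, ‖a i‖ ≤ t) → ‖∑ i, a i • x i‖ ≤ t) :
    AuxTwoSumming (𝕜 := 𝕜) x (48 * C ^ 2) := by
  set κ0 : ℝ := (∑ i, ‖x i‖ ^ 2) * n with hκ0
  have hκ0' : 0 ≤ κ0 := by positivity
  have h0 : AuxTwoSumming (𝕜 := 𝕜) x κ0 := by
    intro m f S hS
    have h1 : ∀ j, ‖∑ i, f j i • x i‖ ^ 2 ≤ (∑ i, ‖x i‖ ^ 2) * ∑ i, ‖f j i‖ ^ 2 := by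
      intro j
      have : ‖∑ i, f j i • x i‖ ≤ ∑ i, ‖x i‖ * ‖f j i‖ := by
        refine (norm_sum_le _ _).trans (le_of_eq ?_)
        exact Finset.sum_congr rfl fun i _ => by rw [norm_smul, mul_comm]
      exact (pow_le_pow_left₀ (norm_nonneg _) this 2).trans (Finset.sum_mul_sq_le_sq_mul_sq _ _ _)
    refine (Finset.sum_le_sum fun j _ => h1 j).trans ?_
    rw [← Finset.mul_sum, Finset.sum_comm, hκ0, mul_assoc]
    refine mul_le_mul_of_nonneg_left ?_ (by positivity)
    refine (Finset.sum_le_sum fun i _ => hS i).trans ?_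
    simp
  have hk : ∀ k : ℕ, AuxTwoSumming (𝕜 := 𝕜) x (48 * C ^ 2 + κ0 * (1 / 2) ^ k) := by
    intro k
    induction k with
    | zero =>
      intro m f S hS
      have hS0 : 0 ≤ S := le_trans (by positivity) (hS 0)
      refine (h0 m f S hS).trans (mul_le_mul_of_nonneg_right ?_ hS0)
      simp; positivity
    | succ k ih =>
      have := aux_B2 C hC0 hC x hx _ (by positivity) ih
      convert this using 1
      rw [pow_succ]; ring
  intro m f S hS
  have ht : Filter.Tendsto (fun k : ℕ => (48 * C ^ 2 + κ0 * (1 / 2) ^ k) * S) Filter.atTop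
      (nhds ((48 * C ^ 2 + κ0 * 0) * S)) :=
    ((tendsto_pow_atTop_nhds_zero_of_lt_one (by norm_num) (by norm_num)).const_mul κ0
      |>.const_add _).mul_const S
  rw [mul_zero, add_zero] at ht
  exact ge_of_tendsto' ht (fun k => hk k m f S hS)

theorem aux_C1 {𝕜 : Type*} [RCLike 𝕜] {E : Type*} [NormedAddCommGroup E] [NormedSpace 𝕜 E]
    (C : ℝ) (hC0 : 0 < C)
    (hC : ∀ (m : ℕ) (x : Fin m → E), ∑ j, ‖x j‖ ^ 2 ≤
      C * ((∑ ε : Fin m → Bool, ‖∑ j, (if ε j then x j else -x j)‖ ^ 2) / 2 ^ m))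
    (N : E → ℝ)
    (hN1 : ∀ (t : ℝ) (x : E), 0 ≤ t → N ((t : 𝕜) • x) = t * N x)
    (hN2 : ∀ (n : ℕ) (x : Fin n → E) (S : ℝ),
      (∀ φ : {φ : WeakDual 𝕜 E // ∀ z, ‖φ z‖ ≤ ‖z‖}, ∑ i, ‖φ.1 (x i)‖ ^ 2 ≤ S) →
        ∑ i, N (x i) ^ 2 ≤ S)
    (n : ℕ) (x : Fin n → E)
    (hx : ∀ φ : {φ : WeakDual 𝕜 E // ∀ z, ‖φ z‖ ≤ ‖z‖}, ∑ i, ‖φ.1 (x i)‖ ≤ 1) :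
    ∑ i, N (x i) ≤ Real.sqrt (48 * C ^ 2) := by
  rcases Nat.eq_zero_or_pos n with rfl | hn
  · simp
  have : NeZero n := ⟨hn.ne'⟩
  set D : ℝ := 48 * C ^ 2 with hD
  have hD0 : 0 ≤ D := by positivity
  have hx' : ∀ (a : Fin n → 𝕜) (t : ℝ), 0 ≤ t → (∀ i, ‖a i‖ ≤ t) → ‖∑ i, a i • x i‖ ≤ t := by
    intro a t ht ha
    obtain ⟨g, hg1, hg2⟩ := exists_dual_vector'' 𝕜 (∑ i, a i • x i)
    have h1 := hx ⟨StrongDual.toWeakDual g, fun z => by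
      have := g.le_of_opNorm_le hg1 z
      simpa using this⟩
    have h1' : ∑ i, ‖g (x i)‖ ≤ 1 := h1
    have h2 : ‖∑ i, a i • x i‖ = ‖g (∑ i, a i • x i)‖ := by rw [hg2]; simp
    rw [h2, map_sum]
    refine (norm_sum_le _ _).trans ?_
    calc _ ≤ ∑ i, t * ‖g (x i)‖ := by
          refine Finset.sum_le_sum fun i _ => ?_
          rw [map_smul, norm_smul]
          exact mul_le_mul_of_nonneg_right (ha i) (norm_nonneg _)
      _ = t * ∑ i, ‖g (x i)‖ := by rw [Finset.mul_sum]
      _ ≤ t * 1 := mul_le_mul_of_nonneg_left h1' ht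
      _ = t := mul_one t
  obtain ⟨l, hl0, hl1, hl⟩ := aux_B1 x D (aux_B3 C hC0 hC x hx')
  let y : Fin n → E := fun i => (((Real.sqrt (l i))⁻¹ : ℝ) : 𝕜) • x i
  have hz : ∀ i, l i = 0 → x i = 0 := by
    intro i hi
    have := hl (Pi.single i 1)
    have e1 : ∑ j, (Pi.single i 1 : Fin n → 𝕜) j • x j = x i := by
      simp [Pi.single_apply]
    have e2 : ∑ j, l j * ‖(Pi.single i 1 : Fin n → 𝕜) j‖ ^ 2 = 0 := by
      refine Finset.sum_eq_zero fun j _ => ?_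
      rcases eq_or_ne j i with rfl | h
      · simp [hi]
      · simp [h]
    rw [e1, e2, mul_zero] at this
    have : ‖x i‖ ^ 2 = 0 := le_antisymm this (by positivity)
    simpa using this
  have hxy : ∀ i, x i = ((Real.sqrt (l i) : ℝ) : 𝕜) • y i := by
    intro i
    rcases (hl0 i).eq_or_lt with h | h
    · simp [y, hz i h.symm]
    · have : Real.sqrt (l i) ≠ 0 := (Real.sqrt_pos.2 h).ne'
      simp only [y, smul_smul, ← RCLike.ofReal_mul]
      rw [mul_inv_cancel₀ this]; simp
  have hy : ∑ i, N (y i) ^ 2 ≤ D := by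
    refine hN2 n y D fun φ => ?_
    set S := ∑ i, ‖φ.1 (y i)‖ ^ 2 with hS
    have hS0 : 0 ≤ S := by positivity
    let a : Fin n → 𝕜 := fun i => (((Real.sqrt (l i))⁻¹ : ℝ) : 𝕜) * star (φ.1 (y i))
    have h1 : φ.1 (∑ i, a i • x i) = (S : 𝕜) := by
      rw [map_sum, hS]
      push_cast
      refine Finset.sum_congr rfl fun i _ => ?_
      rw [map_smul, smul_eq_mul]
      have : φ.1 (y i) = (((Real.sqrt (l i))⁻¹ : ℝ) : 𝕜) * φ.1 (x i) := by
        simp only [y]; rw [map_smul, smul_eq_mul]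
      rw [← RCLike.conj_mul]
      simp only [a]
      rw [starRingEnd_apply]
      nth_rewrite 3 [this]
      ring
    have h2 : S ^ 2 ≤ D * S := by
      have h3 := φ.2 (∑ i, a i • x i)
      rw [h1, RCLike.norm_ofReal, abs_of_nonneg hS0] at h3
      refine (pow_le_pow_left₀ hS0 h3 2).trans ((hl a).trans ?_)
      refine mul_le_mul_of_nonneg_left ?_ hD0
      refine Finset.sum_le_sum fun i _ => ?_
      simp only [a, norm_mul, norm_star, mul_pow, RCLike.norm_ofReal, sq_abs, inv_pow,
        Real.sq_sqrt (hl0 i)]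
      rw [← mul_assoc]
      refine mul_le_of_le_one_left (by positivity) ?_
      exact mul_inv_le_one
    rcases hS0.eq_or_lt with h | h
    · rw [← h]; exact hD0
    · nlinarith
  have h3 : ∑ i, N (x i) = ∑ i, Real.sqrt (l i) * N (y i) := by
    refine Finset.sum_congr rfl fun i _ => ?_
    conv_lhs => rw [hxy i]
    exact hN1 _ _ (Real.sqrt_nonneg _)
  refine Real.le_sqrt_of_sq_le ?_
  rw [h3]
  refine (Finset.sum_mul_sq_le_sq_mul_sq _ _ _).trans ?_
  simp only [Real.sq_sqrt (hl0 _), hl1, one_mul]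
  exact hy

theorem aux_C2 {𝕜 : Type*} [RCLike 𝕜] {E : Type*} [NormedAddCommGroup E] [NormedSpace 𝕜 E]
    (C : ℝ) (hC0 : 0 < C)
    (hC : ∀ (m : ℕ) (x : Fin m → E), ∑ j, ‖x j‖ ^ 2 ≤
      C * ((∑ ε : Fin m → Bool, ‖∑ j, (if ε j then x j else -x j)‖ ^ 2) / 2 ^ m))
    (N : E → ℝ)
    (hN1 : ∀ (t : ℝ) (x : E), 0 ≤ t → N ((t : 𝕜) • x) = t * N x)
    (hN2 : ∀ (n : ℕ) (x : Fin n → E) (S : ℝ),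
      (∀ φ : {φ : WeakDual 𝕜 E // ∀ z, ‖φ z‖ ≤ ‖z‖}, ∑ i, ‖φ.1 (x i)‖ ^ 2 ≤ S) →
        ∑ i, N (x i) ^ 2 ≤ S)
    [MeasurableSpace {φ : WeakDual 𝕜 E // ∀ z, ‖φ z‖ ≤ ‖z‖}]
    [BorelSpace {φ : WeakDual 𝕜 E // ∀ z, ‖φ z‖ ≤ ‖z‖}] :
    ∃ μ : Measure {φ : WeakDual 𝕜 E // ∀ z, ‖φ z‖ ≤ ‖z‖},
      IsProbabilityMeasure μ ∧ μ.Regular ∧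
      ∀ x, N x ≤ Real.sqrt (48 * C ^ 2) * ∫ φ, ‖φ.1 x‖ ∂μ := by
  have := aux_compact 𝕜 E
  have : Nonempty {φ : WeakDual 𝕜 E // ∀ z, ‖φ z‖ ≤ ‖z‖} := ⟨⟨0, fun z => by
    change ‖(0 : 𝕜)‖ ≤ ‖z‖
    simp⟩⟩
  set R := Real.sqrt (48 * C ^ 2) with hR
  have hcont : ∀ x : E, Continuous fun φ : {φ : WeakDual 𝕜 E // ∀ z, ‖φ z‖ ≤ ‖z‖} => ‖φ.1 x‖ :=
    fun x => ((WeakDual.eval_continuous x).comp continuous_subtype_val).norm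
  let e : E → C({φ : WeakDual 𝕜 E // ∀ z, ‖φ z‖ ≤ ‖z‖}, ℝ) := fun x => ⟨_, hcont x⟩
  obtain ⟨L, hpos, h1, hL⟩ := aux_pietsch (fun x : E => R • e x - N x • 1) (by
    intro n w x hw
    let G := ∑ i, w i • e (x i)
    obtain ⟨φ0, -, hφ0⟩ := isCompact_univ.exists_isMaxOn Set.univ_nonempty G.continuous.continuousOn
    have hmax : ∀ φ, G φ ≤ G φ0 := fun φ => hφ0 (Set.mem_univ φ)
    have hG : ∀ φ, G φ = ∑ i, ‖φ.1 ((w i : 𝕜) • x i)‖ := by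
      intro φ
      simp only [G, ContinuousMap.sum_apply, ContinuousMap.smul_apply, e, ContinuousMap.coe_mk,
        smul_eq_mul]
      refine Finset.sum_congr rfl fun i _ => ?_
      rw [map_smul, norm_smul, RCLike.norm_ofReal, abs_of_nonneg (hw i)]
    refine ⟨φ0, ?_⟩
    have key : ∑ i, w i * N (x i) ≤ R * G φ0 := by
      have hG0 : 0 ≤ G φ0 := by rw [hG]; positivity
      refine le_of_forall_pos_le_add fun δ hδ => ?_
      have hR0 : 0 ≤ R := Real.sqrt_nonneg _
      set W := G φ0 + δ / (R + 1) with hW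
      have hW0 : 0 < W := by positivity
      have := aux_C1 C hC0 hC N hN1 hN2 n (fun i => ((W⁻¹ * w i : ℝ) : 𝕜) • x i) (fun φ => by
        have h2 : ∑ i, ‖φ.1 (((W⁻¹ * w i : ℝ) : 𝕜) • x i)‖ = W⁻¹ * G φ := by
          rw [hG, Finset.mul_sum]
          refine Finset.sum_congr rfl fun i _ => ?_
          rw [RCLike.ofReal_mul, mul_smul, map_smul, norm_smul, RCLike.norm_ofReal,
            abs_of_nonneg (by positivity)]
        rw [h2, inv_mul_le_one₀ hW0]
        have : 0 < δ / (R + 1) := by positivity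
        linarith [hmax φ])
      have h3 : ∀ i, N (((W⁻¹ * w i : ℝ) : 𝕜) • x i) = W⁻¹ * (w i * N (x i)) := fun i => by
        rw [hN1 _ _ (mul_nonneg (by positivity) (hw i)), mul_assoc]
      simp only [h3, ← Finset.mul_sum] at this
      rw [inv_mul_le_iff₀ hW0] at this
      refine this.trans ?_
      rw [← hR, hW, add_mul, mul_comm]
      gcongr
      rw [div_mul_eq_mul_div, div_le_iff₀ (by positivity)]
      nlinarith
    have e1 : ∑ i, w i * (R • e (x i) - N (x i) • 1 : C(_, ℝ)) φ0 =
        R * G φ0 - ∑ i, w i * N (x i) := by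
      simp only [G, ContinuousMap.sum_apply, ContinuousMap.smul_apply, ContinuousMap.sub_apply,
        ContinuousMap.one_apply, smul_eq_mul, mul_one, mul_sub, Finset.sum_sub_distrib,
        Finset.mul_sum]
      congr 1
      exact Finset.sum_congr rfl fun i _ => by ring
    rw [e1]; linarith)
  obtain ⟨μ, hμ1, hμ2, hμ⟩ := aux_riesz L hpos h1
  refine ⟨μ, hμ1, hμ2, fun x => ?_⟩
  have h2 := hL x
  rw [map_sub, map_smul, map_smul, h1, ← hμ] at h2
  simp only [smul_eq_mul, mul_one, e, ContinuousMap.coe_mk] at h2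
  linarith

theorem aux_main1 {𝕜 : Type*} [RCLike 𝕜] {E : Type*} [NormedAddCommGroup E] [NormedSpace 𝕜 E]
    (C : ℝ) (hC0 : 0 < C)
    (hC : ∀ (m : ℕ) (x : Fin m → E), ∑ j, ‖x j‖ ^ 2 ≤
      C * ((∑ ε : Fin m → Bool, ‖∑ j, (if ε j then x j else -x j)‖ ^ 2) / 2 ^ m))
    {Ω : Type*} [TopologicalSpace Ω] [CompactSpace Ω] [MeasurableSpace Ω] [BorelSpace Ω]
    (ρ : Measure Ω) [IsProbabilityMeasure ρ]
    (θ : Ω → {φ : WeakDual 𝕜 E // ∀ z, ‖φ z‖ ≤ ‖z‖}) (hθ : Continuous θ)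
    [MeasurableSpace {φ : WeakDual 𝕜 E // ∀ z, ‖φ z‖ ≤ ‖z‖}]
    [BorelSpace {φ : WeakDual 𝕜 E // ∀ z, ‖φ z‖ ≤ ‖z‖}] :
    ∃ μ : Measure {φ : WeakDual 𝕜 E // ∀ z, ‖φ z‖ ≤ ‖z‖},
      IsProbabilityMeasure μ ∧ μ.Regular ∧
      ∀ x, Real.sqrt (∫ ω, ‖(θ ω).1 x‖ ^ 2 ∂ρ) ≤ Real.sqrt (48 * C ^ 2) * ∫ φ, ‖φ.1 x‖ ∂μ := by
  have hcont : ∀ x : E, Continuous fun ω => ‖(θ ω).1 x‖ ^ 2 :=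
    fun x => (((WeakDual.eval_continuous x).comp
      (continuous_subtype_val.comp hθ)).norm).pow 2
  have hint : ∀ x : E, Integrable (fun ω => ‖(θ ω).1 x‖ ^ 2) ρ := fun x =>
    (hcont x).integrable_of_hasCompactSupport (HasCompactSupport.of_compactSpace _)
  refine aux_C2 C hC0 hC (fun x => Real.sqrt (∫ ω, ‖(θ ω).1 x‖ ^ 2 ∂ρ)) ?_ ?_
  · intro t x ht
    have : ∀ ω, ‖(θ ω).1 ((t : 𝕜) • x)‖ ^ 2 = t ^ 2 * ‖(θ ω).1 x‖ ^ 2 := fun ω => by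
      rw [map_smul, norm_smul, RCLike.norm_ofReal, mul_pow, sq_abs]
    simp only [this]
    rw [integral_const_mul, Real.sqrt_mul (by positivity), Real.sqrt_sq ht]
  · intro n x S hS
    have : ∀ i, Real.sqrt (∫ ω, ‖(θ ω).1 (x i)‖ ^ 2 ∂ρ) ^ 2 = ∫ ω, ‖(θ ω).1 (x i)‖ ^ 2 ∂ρ :=
      fun i => Real.sq_sqrt (integral_nonneg fun ω => by positivity)
    simp only [this]
    rw [← integral_finsetSum _ (fun i _ => hint (x i))]
    calc _ ≤ ∫ ω, S ∂ρ := integral_mono (integrable_finsetSum _ fun i _ => hint (x i))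
            (integrable_const _) (fun ω => hS (θ ω))
      _ = S := by simp

theorem aux_main2 {K : Type*} [TopologicalSpace K] [CompactSpace K] [T2Space K]
    [MeasurableSpace K] [BorelSpace K] [MeasurableSpace (Fin 2 → K)] [BorelSpace (Fin 2 → K)]
    (μ0 μ1 : Measure K) [IsProbabilityMeasure μ0] [IsProbabilityMeasure μ1] :
    ∃ μ : Measure (Fin 2 → K), IsProbabilityMeasure μ ∧ μ.Regular ∧
      ∀ g0 g1 : C(K, ℝ), ∫ k, g0 (k 0) * g1 (k 1) ∂μ = (∫ k, g0 k ∂μ0) * ∫ k, g1 k ∂μ1 := by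
  have hint : ∀ (ν : Measure K) [IsProbabilityMeasure ν] (g : C(K, ℝ)), Integrable g ν := fun ν _ g =>
    g.continuous.integrable_of_hasCompactSupport (HasCompactSupport.of_compactSpace _)
  let I1 : C(K, ℝ) →L[ℝ] ℝ := LinearMap.mkContinuous
    { toFun := fun g => ∫ k, g k ∂μ1
      map_add' := fun f g => integral_add (hint μ1 f) (hint μ1 g)
      map_smul' := fun c f => integral_const_mul c _ } 1 (fun g => by
        have := norm_integral_le_of_norm_le_const (μ := μ1) (f := g) (C := ‖g‖)
          (Filter.Eventually.of_forall fun k => g.norm_coe_le_norm k)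
        simpa using this)
  have hI1 : ∀ g, I1 g = ∫ k, g k ∂μ1 := fun g => rfl
  let mk : C(K × K, Fin 2 → K) := ⟨fun p => ![p.1, p.2], by
    refine continuous_pi fun i => ?_
    fin_cases i
    · exact continuous_fst
    · exact continuous_snd⟩
  let J : C(Fin 2 → K, ℝ) → C(K, ℝ) := fun f => ⟨fun a => I1 ((f.comp mk).curry a),
    I1.continuous.comp (f.comp mk).curry.continuous⟩
  have hJ : ∀ f a, J f a = ∫ b, f ![a, b] ∂μ1 := fun f a => rfl
  let L : C(Fin 2 → K, ℝ) →ₗ[ℝ] ℝ :=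
    { toFun := fun f => ∫ a, J f a ∂μ0
      map_add' := fun f g => by
        rw [← integral_add (hint μ0 _) (hint μ0 _)]
        refine integral_congr_ae (Filter.Eventually.of_forall fun a => ?_)
        exact I1.map_add ((f.comp mk).curry a) ((g.comp mk).curry a)
      map_smul' := fun c f => by
        rw [RingHom.id_apply, smul_eq_mul, ← integral_const_mul]
        refine integral_congr_ae (Filter.Eventually.of_forall fun a => ?_)
        exact I1.map_smul c ((f.comp mk).curry a) }
  have hL : ∀ f, L f = ∫ a, ∫ b, f ![a, b] ∂μ1 ∂μ0 := fun f => rfl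
  obtain ⟨μ, h1, h2, h3⟩ := aux_riesz L (fun g hg => by
    rw [hL]
    exact integral_nonneg fun a => integral_nonneg fun b => hg _) (by rw [hL]; simp)
  refine ⟨μ, h1, h2, fun g0 g1 => ?_⟩
  have := h3 ⟨fun k => g0 (k 0) * g1 (k 1), by fun_prop⟩
  rw [hL] at this
  simp only [ContinuousMap.coe_mk, Matrix.cons_val_zero, Matrix.cons_val_one,
    integral_const_mul, integral_mul_const] at this
  exact this

/-- If `E` has cotype 2, then for every Banach space `F` a continuous
bilinear map `T : E × E → F` is `1`-semi-integral if and only if it is `1`-dominated. -/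
theorem semiIntegral_iff_dominated_of_cotype2 {𝕜 : Type*} [RCLike 𝕜] {E : Type*}
    [NormedAddCommGroup E] [NormedSpace 𝕜 E] [CompleteSpace E]
    (hE : HasCotype 2 E)
    {F : Type*} [NormedAddCommGroup F] [NormedSpace 𝕜 F] [CompleteSpace F]
    (T : ContinuousMultilinearMap 𝕜 (fun _ : Fin 2 => E) F) :
    (∃ C, 0 ≤ C ∧ SemiIntegralWith 𝕜 1 C ⇑T) ↔ (∃ C, 0 ≤ C ∧ DominatedWith 𝕜 1 C ⇑T) := by
  obtain ⟨C1, hC1, hcot⟩ := hE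
  let C : ℝ := C1 ^ 2 + 1
  have hC0 : 0 < C := by positivity
  have hC : ∀ (m : ℕ) (x : Fin m → E), ∑ j, ‖x j‖ ^ 2 ≤
      C * ((∑ ε : Fin m → Bool, ‖∑ j, (if ε j then x j else -x j)‖ ^ 2) / 2 ^ m) := by
    intro m x
    have h := hcot m x
    simp only [Real.rpow_two, ← Real.sqrt_eq_rpow] at h
    have h2 := pow_le_pow_left₀ (Real.sqrt_nonneg _) h 2
    rw [mul_pow, Real.sq_sqrt (by positivity), Real.sq_sqrt (by positivity)] at h2
    refine h2.trans (mul_le_mul_of_nonneg_right ?_ (by positivity))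
    simp [C]
  have hcomp := aux_compact 𝕜 E
  have hcont : ∀ x : E, Continuous fun φ : {φ : WeakDual 𝕜 E // ∀ z, ‖φ z‖ ≤ ‖z‖} => ‖φ.1 x‖ :=
    fun x => ((WeakDual.eval_continuous x).comp continuous_subtype_val).norm
  letI m1 : MeasurableSpace {φ : WeakDual 𝕜 E // ∀ z, ‖φ z‖ ≤ ‖z‖} := borel _
  have b1 : BorelSpace {φ : WeakDual 𝕜 E // ∀ z, ‖φ z‖ ≤ ‖z‖} := ⟨rfl⟩
  letI m2 : MeasurableSpace (Fin 2 → {φ : WeakDual 𝕜 E // ∀ z, ‖φ z‖ ≤ ‖z‖}) := borel _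
  have b2 : BorelSpace (Fin 2 → {φ : WeakDual 𝕜 E // ∀ z, ‖φ z‖ ≤ ‖z‖}) := ⟨rfl⟩
  constructor
  · rintro ⟨A, hA, ρ, hρ1, hρ2, hρ⟩
    have hρ' : ∀ x : Fin 2 → E, ‖T x‖ ≤ A * ∫ φ : (Fin 2 → {φ : WeakDual 𝕜 E // ∀ z, ‖φ z‖ ≤ ‖z‖}),
        ‖(φ 0).1 (x 0)‖ * ‖(φ 1).1 (x 1)‖ ∂ρ := by
      intro x
      have := hρ x
      simp only [Real.rpow_one, Fin.prod_univ_two, div_one] at this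
      exact this
    choose ν hν1 hν2 hν using fun i : Fin 2 =>
      aux_main1 (𝕜 := 𝕜) C hC0 hC ρ (fun φ => φ i) (continuous_apply i)
    refine ⟨A * (Real.sqrt (48 * C ^ 2) * Real.sqrt (48 * C ^ 2)), by positivity, ν, hν1, hν2, fun x => ?_⟩
    simp only [Real.rpow_one, Fin.prod_univ_two, div_one]
    refine (hρ' x).trans ?_
    rw [mul_assoc]
    refine mul_le_mul_of_nonneg_left ?_ hA
    have hc : ∀ (i : Fin 2), Continuous
        fun φ : (Fin 2 → {φ : WeakDual 𝕜 E // ∀ z, ‖φ z‖ ≤ ‖z‖}) => ‖(φ i).1 (x i)‖ :=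
      fun i => (hcont (x i)).comp (continuous_apply i)
    have hm : ∀ i : Fin 2, MemLp
        (fun φ : (Fin 2 → {φ : WeakDual 𝕜 E // ∀ z, ‖φ z‖ ≤ ‖z‖}) => ‖(φ i).1 (x i)‖)
        (ENNReal.ofReal 2) ρ := fun i =>
      (hc i).memLp_of_hasCompactSupport (HasCompactSupport.of_compactSpace _)
    have hCS := integral_mul_le_Lp_mul_Lq_of_nonneg (μ := ρ) Real.HolderConjugate.two_two
      (Filter.Eventually.of_forall fun φ => norm_nonneg ((φ 0).1 (x 0)))
      (Filter.Eventually.of_forall fun φ => norm_nonneg ((φ 1).1 (x 1))) (hm 0) (hm 1)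
    simp only [Real.rpow_two, ← Real.sqrt_eq_rpow] at hCS
    refine hCS.trans ((mul_le_mul (hν 0 (x 0)) (hν 1 (x 1)) (Real.sqrt_nonneg _) ?_).trans
      (le_of_eq ?_))
    · exact mul_nonneg (Real.sqrt_nonneg _) (integral_nonneg fun _ => norm_nonneg _)
    · ring
  · rintro ⟨A, hA, ν, hν1, hν2, hν⟩
    have := hν1 0
    have := hν1 1
    obtain ⟨μ, h1, h2, h3⟩ := aux_main2 (ν 0) (ν 1)
    refine ⟨A, hA, μ, h1, h2, fun x => ?_⟩
    have h4 := hν x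
    have h5 := h3 ⟨_, hcont (x 0)⟩ ⟨_, hcont (x 1)⟩
    simp only [ContinuousMap.coe_mk] at h5
    simp only [Real.rpow_one, Fin.prod_univ_two, div_one] at h4 ⊢
    rw [← h5] at h4
    exact h4
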